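/- arXiv:0806.4874 — 6 statements merged into one kernel-verified Lean document; each statement's English description precedes it below -/
import Mathlib

section
/- For every real path-loss exponent η ≥ 2, every κ > 0 and P > 0, every integer T ≥ 7, every integer t with 4 ≤ t ≤ T−3, and every choice of power-split parameters α_1, …, α_{T−2} ∈ [0,1], the interference power satisfies P_int(t) < 6 κ P · Σ_{n=1}^{∞} n^{−η} (where Σ_{n=1}^{∞} n^{−η} is the value of the Riemann zeta function at η). -/
/-!
Write `f j = j ^ (-η)` and `c = κ * P`. Everything rests on `(√a + √b)² ≤ 2 a + 2 b`.

* Upstream interference (distances `3, …, t - 1`): bounding the power fractions by `1` and using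
  that `f` is decreasing, each squared term is at most `4 c f j`. Since the distance `1` never
  occurs here, the total is at most `4 c (ζ(η) - 1)`, which is where strictness comes from.
* Downstream interference: the fraction `1 - α` of a node is received together with the previous
  node's signal and its fraction `α` together with the next node's, both weighted by the same `f`.
  After the quadratic bound the two fractions add up to one, so the total telescopes to at most
  `2 c ζ(η)` (`downstream_sum_le`).
-/

open Finset Real

/-- Interference power at node `t` under two-hop myopic decode-forward in the
`T`-node Gaussian multiple-relay channel with unit node spacing, path-loss
exponent `η`, channel-gain constant `κ`, per-node power `P`, and power splits `α`. -/
noncomputable def Pint (η κ P : ℝ) (T t : ℕ) (α : ℕ → ℝ) : ℝ :=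
  (∑ j ∈ Finset.Icc 3 (t - 2),
      (Real.sqrt ((j : ℝ) ^ (-η) * (1 - α (t - j)) * (κ * P)) +
        Real.sqrt (((j : ℝ) + 1) ^ (-η) * α (t - j - 1) * (κ * P))) ^ 2)
  + ((t : ℝ) - 1) ^ (-η) * (1 - α 1) * (κ * P)
  + (∑ j ∈ Finset.Icc 1 (T - t - 3),
      (Real.sqrt ((j : ℝ) ^ (-η) * α (t + j) * (κ * P)) +
        Real.sqrt (((j : ℝ) + 1) ^ (-η) * (1 - α (t + j + 1)) * (κ * P))) ^ 2)
  + (Real.sqrt (((T : ℝ) - (t : ℝ) - 2) ^ (-η) * α (T - 2) * (κ * P)) +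
      Real.sqrt (((T : ℝ) - (t : ℝ) - 1) ^ (-η) * (κ * P))) ^ 2

lemma sq_sqrt_add_sqrt_le {a b : ℝ} (ha : 0 ≤ a) (hb : 0 ≤ b) :
    (√a + √b) ^ 2 ≤ 2 * a + 2 * b := by
  nlinarith [Real.sq_sqrt ha, Real.sq_sqrt hb, sq_nonneg (√a - √b)]

/-- Downstream interference of the first `m` pairs. The subtracted term is the fraction of node
`m + 1` still to be received, which makes the induction close. -/
lemma downstream_sum_le (η c : ℝ) (hc : 0 ≤ c) (β : ℕ → ℝ) (m : ℕ)
    (hβ : ∀ j, 1 ≤ j → j ≤ m + 1 → β j ∈ Set.Icc (0 : ℝ) 1) :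
    ∑ j ∈ Finset.Icc 1 m, (√((j : ℝ) ^ (-η) * β j * c) +
        √(((j : ℝ) + 1) ^ (-η) * (1 - β (j + 1)) * c)) ^ 2
      ≤ 2 * c * ∑ j ∈ Finset.Icc 1 (m + 1), (j : ℝ) ^ (-η)
        - 2 * c * (((m : ℝ) + 1) ^ (-η) * β (m + 1)) := by
  induction m with
  | zero =>
    have h := (hβ 1 le_rfl le_rfl).2
    simp
    nlinarith
  | succ m ih =>
    have ih' := ih fun j h1 h2 => hβ j h1 (by omega)
    rw [Finset.sum_Icc_succ_top (by omega), Finset.sum_Icc_succ_top (b := m + 1) (by omega)]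
    have h1 := (hβ (m + 1) (by omega) (by omega)).1
    have h2 := sub_nonneg.2 (hβ (m + 1 + 1) (by omega) le_rfl).2
    have key := sq_sqrt_add_sqrt_le
      (a := ((m + 1 : ℕ) : ℝ) ^ (-η) * β (m + 1) * c)
      (b := (((m + 1 : ℕ) : ℝ) + 1) ^ (-η) * (1 - β (m + 1 + 1)) * c)
      (by positivity) (by positivity)
    push_cast at key ih' ⊢
    linarith

lemma summable_shift_rpow {η : ℝ} (hη : 2 ≤ η) :
    Summable fun n : ℕ => ((n : ℝ) + 1) ^ (-η) := by
  have h := (summable_nat_add_iff 1).2 (Real.summable_nat_rpow.2 (by linarith : -η < -1))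
  simpa using h

lemma sum_Icc_rpow_le_tsum {η : ℝ} (hη : 2 ≤ η) (n : ℕ) :
    ∑ j ∈ Finset.Icc 1 n, (j : ℝ) ^ (-η) ≤ ∑' n : ℕ, ((n : ℝ) + 1) ^ (-η) := by
  have h := (summable_shift_rpow hη).sum_le_tsum (Finset.range n) fun i _ => by positivity
  refine le_trans (le_of_eq ?_) h
  clear h
  induction n with
  | zero => simp
  | succ n ih => rw [Finset.sum_Icc_succ_top (by omega), Finset.sum_range_succ, ih, Nat.cast_succ]

/-- The interference power at any interior node `t` (with `4 ≤ t ≤ T − 3`) is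
strictly less than `6 κ P ζ(η)`, where `ζ(η) = ∑_{n=1}^∞ n^{−η}`. -/
theorem pint_lt_six_kP_zeta
    (η κ P : ℝ) (hη : 2 ≤ η) (hκ : 0 < κ) (hP : 0 < P)
    (T t : ℕ) (hT : 7 ≤ T) (ht4 : 4 ≤ t) (htT : t ≤ T - 3)
    (α : ℕ → ℝ) (hα : ∀ i, 1 ≤ i → i ≤ T - 2 → α i ∈ Set.Icc (0 : ℝ) 1) :
    Pint η κ P T t α < 6 * κ * P * ∑' n : ℕ, ((n : ℝ) + 1) ^ (-η) := by
  have hc : 0 < κ * P := mul_pos hκ hP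
  set c := κ * P with hcdef
  set Z := ∑' n : ℕ, ((n : ℝ) + 1) ^ (-η) with hZ
  obtain ⟨m, rfl⟩ : ∃ m, T = t + m + 3 := ⟨T - t - 3, by omega⟩
  obtain ⟨s, rfl⟩ : ∃ s, t = s + 4 := ⟨t - 4, by omega⟩
  have hup : (∑ j ∈ Finset.Icc 3 (s + 4 - 2),
      (√((j : ℝ) ^ (-η) * (1 - α (s + 4 - j)) * c) +
        √(((j : ℝ) + 1) ^ (-η) * α (s + 4 - j - 1) * c)) ^ 2)
      ≤ ∑ j ∈ Finset.Icc 3 (s + 2), 4 * c * (j : ℝ) ^ (-η) := by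
    refine Finset.sum_le_sum fun j hj => ?_
    rw [Finset.mem_Icc] at hj
    have hj0 : (0 : ℝ) < j := by exact_mod_cast (by omega : 0 < j)
    have h1 := hα (s + 4 - j) (by omega) (by omega)
    have h2 := hα (s + 4 - j - 1) (by omega) (by omega)
    have h1' := sub_nonneg.2 h1.2
    have h2' := h2.1
    have hdec : ((j : ℝ) + 1) ^ (-η) ≤ (j : ℝ) ^ (-η) :=
      Real.rpow_le_rpow_of_nonpos hj0 (by linarith) (by linarith)
    have hf : 0 ≤ (j : ℝ) ^ (-η) := by positivity
    have hf' : 0 ≤ ((j : ℝ) + 1) ^ (-η) := by positivity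
    refine (sq_sqrt_add_sqrt_le (by positivity) (by positivity)).trans ?_
    have e1 : (j : ℝ) ^ (-η) * (1 - α (s + 4 - j)) * c ≤ (j : ℝ) ^ (-η) * c :=
      mul_le_mul_of_nonneg_right (mul_le_of_le_one_right hf (by linarith [h1.1])) hc.le
    have e2 : ((j : ℝ) + 1) ^ (-η) * α (s + 4 - j - 1) * c ≤ (j : ℝ) ^ (-η) * c :=
      mul_le_mul_of_nonneg_right ((mul_le_of_le_one_right hf' h2.2).trans hdec) hc.le
    linarith
  have hfar : (((s + 4 : ℕ) : ℝ) - 1) ^ (-η) * (1 - α 1) * c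
      ≤ 4 * c * ((s + 3 : ℕ) : ℝ) ^ (-η) := by
    have h1 := hα 1 le_rfl (by omega)
    have e : ((s + 4 : ℕ) : ℝ) - 1 = ((s + 3 : ℕ) : ℝ) := by push_cast; ring
    rw [e]
    have hf : 0 ≤ ((s + 3 : ℕ) : ℝ) ^ (-η) := by positivity
    have := mul_le_mul_of_nonneg_right
      (mul_le_of_le_one_right hf (by linarith [h1.1] : 1 - α 1 ≤ 1)) hc.le
    nlinarith [mul_nonneg hf hc.le]
  -- Distance `1` is absent upstream, so these distances contribute at most `Z - 1`.
  have hupZ : ∑ j ∈ Finset.Icc 3 (s + 2), 4 * c * (j : ℝ) ^ (-η)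
      + 4 * c * ((s + 3 : ℕ) : ℝ) ^ (-η) ≤ 4 * c * (Z - 1) := by
    rw [← Finset.sum_Icc_succ_top (f := fun j : ℕ => 4 * c * (j : ℝ) ^ (-η)) (by omega),
      ← Finset.mul_sum]
    refine mul_le_mul_of_nonneg_left ?_ (by positivity)
    have hz := sum_Icc_rpow_le_tsum hη (s + 2 + 1)
    have hsub : ∑ j ∈ insert 1 (Finset.Icc 3 (s + 2 + 1)), (j : ℝ) ^ (-η)
        ≤ ∑ j ∈ Finset.Icc 1 (s + 2 + 1), (j : ℝ) ^ (-η) := by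
      refine Finset.sum_le_sum_of_subset_of_nonneg ?_ fun i _ _ => by positivity
      intro j hj
      simp only [Finset.mem_insert, Finset.mem_Icc] at hj ⊢
      omega
    rw [Finset.sum_insert (by simp)] at hsub
    simp only [Nat.cast_one, Real.one_rpow] at hsub
    linarith
  have hdown := downstream_sum_le η c hc.le (fun j => α (s + 4 + j)) m
    fun j h1 h2 => hα _ (by omega) (by omega)
  have hlast : (√((((s + 4 + m + 3 : ℕ) : ℝ) - ((s + 4 : ℕ) : ℝ) - 2) ^ (-η)
        * α (s + 4 + m + 3 - 2) * c) +
      √((((s + 4 + m + 3 : ℕ) : ℝ) - ((s + 4 : ℕ) : ℝ) - 1) ^ (-η) * c)) ^ 2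
      ≤ 2 * c * (((m : ℝ) + 1) ^ (-η) * α (s + 4 + (m + 1)))
        + 2 * c * ((m + 1 + 1 : ℕ) : ℝ) ^ (-η) := by
    have e1 : ((s + 4 + m + 3 : ℕ) : ℝ) - ((s + 4 : ℕ) : ℝ) - 2 = (m : ℝ) + 1 := by
      push_cast; ring
    have e2 : ((s + 4 + m + 3 : ℕ) : ℝ) - ((s + 4 : ℕ) : ℝ) - 1 = ((m + 1 + 1 : ℕ) : ℝ) := by
      push_cast; ring
    have e3 : s + 4 + m + 3 - 2 = s + 4 + (m + 1) := by omega
    rw [e1, e2, e3]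
    have h1 := (hα (s + 4 + (m + 1)) (by omega) (by omega)).1
    refine (sq_sqrt_add_sqrt_le (by positivity) (by positivity)).trans (le_of_eq ?_)
    ring
  have hdownZ := sum_Icc_rpow_le_tsum hη (m + 1 + 1)
  rw [Finset.sum_Icc_succ_top (by omega), ← hZ] at hdownZ
  have hdownZ' := mul_le_mul_of_nonneg_left hdownZ (by positivity : 0 ≤ 2 * c)
  have em : s + 4 + m + 3 - (s + 4) - 3 = m := by omega
  have e6 : 6 * κ * P * Z = 6 * c * Z := by rw [hcdef]; ring
  unfold Pint
  rw [em, e6, ← hcdef]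
  simp only [← add_assoc] at hdown hlast hdownZ' ⊢
  linarith
end

section
/- For every real path-loss exponent η ≥ 2, every κ > 0 and P > 0, every integer T ≥ 7, every integer t with 4 ≤ t ≤ T−3, and every choice of power-split parameters α_1, …, α_{T−2} ∈ [0,1], the interference power satisfies P_int(t) < π² κ P (using that Σ_{n=1}^{∞} n^{−η} ≤ Σ_{n=1}^{∞} n^{−2} = π²/6 for η ≥ 2). -/
/-!
Every squared amplitude in the interference is a sum of two square roots, each at most
`√(j⁻² κP)`, where `j` is the distance of the nearer of the two transmitters; so the summand is at
most `4 j⁻² κP` (`sq_amplitude_le`); the isolated term at distance `t - 1` obeys the same bound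
(`power_term_le`). The distances `j` run through `3, …, t - 1` on one side of the
node and `1, …, T - t - 2` on the other. Since `∑ n⁻² = π²/6` and the first range omits
`1` and `1/4`, the total is at most `4 (π²/6 - 5/4 + π²/6) κP = (4π²/3 - 5) κP`, which is
below `π² κP` because `π² < 15`.
-/

open Finset Real

lemma rpow_neg_le_one_div_sq {η x : ℝ} (hη : 2 ≤ η) (hx : 1 ≤ x) :
    x ^ (-η) ≤ 1 / x ^ 2 := by
  have h : x ^ (-η) ≤ x ^ (-2 : ℝ) :=
    Real.rpow_le_rpow_of_exponent_le hx (by linarith)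
  rwa [Real.rpow_neg (by linarith : 0 ≤ x) 2, Real.rpow_two, ← one_div] at h

lemma power_term_le {η x y a c : ℝ} (hη : 2 ≤ η) (hx : 1 ≤ x) (hxy : x ≤ y)
    (ha : a ∈ Set.Icc (0 : ℝ) 1) (hc : 0 ≤ c) :
    y ^ (-η) * a * c ≤ 1 / x ^ 2 * c := by
  have h1 : y ^ (-η) ≤ 1 / x ^ 2 :=
    (rpow_neg_le_one_div_sq hη (hx.trans hxy)).trans (by gcongr)
  have h2 : y ^ (-η) * a ≤ y ^ (-η) :=
    mul_le_of_le_one_right (Real.rpow_nonneg (by linarith) _) ha.2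
  exact mul_le_mul_of_nonneg_right (h2.trans h1) hc

lemma sq_amplitude_le {η x y a b c : ℝ} (hη : 2 ≤ η) (hx : 1 ≤ x) (hxy : x ≤ y)
    (ha : a ∈ Set.Icc (0 : ℝ) 1) (hb : b ∈ Set.Icc (0 : ℝ) 1) (hc : 0 ≤ c) :
    (√(x ^ (-η) * a * c) + √(y ^ (-η) * b * c)) ^ 2 ≤ 4 * c * (1 / x ^ 2) := by
  have h1 := Real.sqrt_le_sqrt (power_term_le hη hx le_rfl ha hc)
  have h2 := Real.sqrt_le_sqrt (power_term_le hη hx hxy hb hc)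
  calc (√(x ^ (-η) * a * c) + √(y ^ (-η) * b * c)) ^ 2
      ≤ (√(1 / x ^ 2 * c) + √(1 / x ^ 2 * c)) ^ 2 := by gcongr
    _ = 4 * √(1 / x ^ 2 * c) ^ 2 := by ring
    _ = 4 * c * (1 / x ^ 2) := by rw [Real.sq_sqrt (by positivity)]; ring

lemma sum_one_div_sq_le (s : Finset ℕ) : ∑ j ∈ s, 1 / (j : ℝ) ^ 2 ≤ π ^ 2 / 6 :=
  sum_le_hasSum s (fun _ _ => by positivity) hasSum_zeta_two

lemma sum_Icc_three_one_div_sq_le (n : ℕ) :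
    ∑ j ∈ Finset.Icc 3 n, 1 / (j : ℝ) ^ 2 ≤ π ^ 2 / 6 - 5 / 4 := by
  have h := sum_one_div_sq_le (insert 1 (insert 2 (Finset.Icc 3 n)))
  rw [Finset.sum_insert (by simp), Finset.sum_insert (by simp)] at h
  norm_num at h ⊢
  linarith

/-- The interference power at any interior node `t` (with `4 ≤ t ≤ T − 3`) is
strictly less than `π² κ P`. -/
theorem pint_lt_pi_sq_kP
    (η κ P : ℝ) (hη : 2 ≤ η) (hκ : 0 < κ) (hP : 0 < P)
    (T t : ℕ) (hT : 7 ≤ T) (ht4 : 4 ≤ t) (htT : t ≤ T - 3)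
    (α : ℕ → ℝ) (hα : ∀ i, 1 ≤ i → i ≤ T - 2 → α i ∈ Set.Icc (0 : ℝ) 1) :
    Pint η κ P T t α < Real.pi ^ 2 * κ * P := by
  have hc : 0 < κ * P := mul_pos hκ hP
  have hα' : ∀ i, 1 ≤ i → i ≤ T - 2 → 1 - α i ∈ Set.Icc (0 : ℝ) 1 := fun i h1 h2 =>
    ⟨by linarith [(hα i h1 h2).2], by linarith [(hα i h1 h2).1]⟩
  -- Reparametrise so that the truncated subtractions in the index ranges disappear.
  obtain ⟨m, rfl⟩ : ∃ m, t = m + 4 := ⟨t - 4, by omega⟩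
  obtain ⟨k, rfl⟩ : ∃ k, T = m + 4 + k + 3 := ⟨T - (m + 4) - 3, by omega⟩
  have e1 : m + 4 - 2 = m + 2 := by omega
  have e2 : m + 4 + k + 3 - (m + 4) - 3 = k := by omega
  unfold Pint
  rw [e1, e2]
  have A : ∑ j ∈ Finset.Icc 3 (m + 2),
      (√((j : ℝ) ^ (-η) * (1 - α (m + 4 - j)) * (κ * P)) +
        √(((j : ℝ) + 1) ^ (-η) * α (m + 4 - j - 1) * (κ * P))) ^ 2
      ≤ 4 * (κ * P) * ∑ j ∈ Finset.Icc 3 (m + 2), 1 / (j : ℝ) ^ 2 := by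
    rw [Finset.mul_sum]
    refine Finset.sum_le_sum fun j hj => ?_
    rw [Finset.mem_Icc] at hj
    exact sq_amplitude_le hη (by exact_mod_cast (by omega : 1 ≤ j)) (by linarith)
      (hα' _ (by omega) (by omega)) (hα _ (by omega) (by omega)) hc.le
  have B : (((m + 4 : ℕ) : ℝ) - 1) ^ (-η) * (1 - α 1) * (κ * P)
      ≤ 4 * (κ * P) * (1 / ((m + 3 : ℕ) : ℝ) ^ 2) := by
    have e : ((m + 4 : ℕ) : ℝ) - 1 = ((m + 3 : ℕ) : ℝ) := by push_cast; ring
    rw [e]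
    have h := power_term_le (x := ((m + 3 : ℕ) : ℝ)) hη
      (by exact_mod_cast (by omega : 1 ≤ m + 3)) le_rfl
      (hα' 1 le_rfl (by omega)) hc.le
    have h0 : 0 ≤ 1 / ((m + 3 : ℕ) : ℝ) ^ 2 * (κ * P) := by positivity
    linarith
  have C : ∑ j ∈ Finset.Icc 1 k,
      (√((j : ℝ) ^ (-η) * α (m + 4 + j) * (κ * P)) +
        √(((j : ℝ) + 1) ^ (-η) * (1 - α (m + 4 + j + 1)) * (κ * P))) ^ 2
      ≤ 4 * (κ * P) * ∑ j ∈ Finset.Icc 1 k, 1 / (j : ℝ) ^ 2 := by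
    rw [Finset.mul_sum]
    refine Finset.sum_le_sum fun j hj => ?_
    rw [Finset.mem_Icc] at hj
    exact sq_amplitude_le hη (by exact_mod_cast hj.1) (by linarith)
      (hα _ (by omega) (by omega)) (hα' _ (by omega) (by omega)) hc.le
  have D : (√((((m + 4 + k + 3 : ℕ) : ℝ) - ((m + 4 : ℕ) : ℝ) - 2) ^ (-η) *
        α (m + 4 + k + 3 - 2) * (κ * P)) +
      √((((m + 4 + k + 3 : ℕ) : ℝ) - ((m + 4 : ℕ) : ℝ) - 1) ^ (-η) * (κ * P))) ^ 2
      ≤ 4 * (κ * P) * (1 / ((k + 1 : ℕ) : ℝ) ^ 2) := by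
    have e : ((m + 4 + k + 3 : ℕ) : ℝ) - ((m + 4 : ℕ) : ℝ) - 2 = ((k + 1 : ℕ) : ℝ) := by
      push_cast; ring
    have h := sq_amplitude_le (x := ((k + 1 : ℕ) : ℝ))
      (y := ((m + 4 + k + 3 : ℕ) : ℝ) - ((m + 4 : ℕ) : ℝ) - 1) (b := 1) hη
      (by exact_mod_cast (by omega : 1 ≤ k + 1)) (by linarith)
      (hα (m + 4 + k + 3 - 2) (by omega) le_rfl) (by simp) hc.le
    rw [mul_one] at h
    rw [e]
    exact h
  have S1 := sum_Icc_three_one_div_sq_le (m + 3)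
  rw [Finset.sum_Icc_succ_top (by omega)] at S1
  have S2 := sum_one_div_sq_le (Finset.Icc 1 (k + 1))
  rw [Finset.sum_Icc_succ_top (by omega)] at S2
  have hS := mul_le_mul_of_nonneg_left (add_le_add S1 S2) (by positivity : 0 ≤ 4 * (κ * P))
  have hpi : π ^ 2 < 15 := by nlinarith [Real.pi_lt_d2, Real.pi_pos]
  have hfin := mul_lt_mul_of_pos_right hpi hc
  linarith
end

section
/- For every real path-loss exponent η ≥ 2, every κ > 0 and P > 0, every integer T ≥ 7, every integer t with 4 ≤ t ≤ T−3, and every choice of power-split parameters α_1, …, α_{T−2} ∈ [0,1], the interference power satisfies P_int(t) ≤ κP · (Σ_{j=3}^{t−1} j^{−η} + Σ_{j=1}^{T−t−1} j^{−η} + 2 Σ_{j=3}^{t−2} j^{−η} + 2 Σ_{j=1}^{T−t−2} j^{−η}) ≤ 6 κP · Σ_{j=1}^{T} j^{−η}. -/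
/-!
Write `f j = j ^ (-η)` and `c = κ P`. Expanding each square in `P_int(t)`, the cross term is
`2 c √(f j · f (j+1) · x y)` with `x, y ∈ [0,1]`, hence at most `2 c f j` because `f` is antitone
(`sq_sqrt_add_sqrt_le`). The remaining diagonal terms regroup by transmitting node: a node at
distance `j` contributes `f j · α + f j · (1 - α) = f j`, except for the node nearest to `t` in each
of the two sums, one of whose parts is missing (`sum_split_telescope`). This gives the first bound.
For the second, each of the six partial sums (counted with multiplicity) is at most the sum over `1 ≤ j ≤ T`.
-/

open Finset Real

/-- The square of a sum of two received amplitudes, with the cross term bounded through the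
stronger gain `a`. -/
lemma sq_sqrt_add_sqrt_le_s2 {a b x y c : ℝ} (hb : 0 ≤ b) (hba : b ≤ a)
    (hx : x ∈ Set.Icc (0 : ℝ) 1) (hy : y ∈ Set.Icc (0 : ℝ) 1) (hc : 0 ≤ c) :
    (√(a * x * c) + √(b * y * c)) ^ 2 ≤ c * (a * x + b * y) + 2 * (c * a) := by
  obtain ⟨hx0, hx1⟩ := hx
  obtain ⟨hy0, hy1⟩ := hy
  have ha : 0 ≤ a := hb.trans hba
  have hxa : a * x ≤ a := mul_le_of_le_one_right ha hx1
  have hyb : b * y ≤ a := (mul_le_of_le_one_right hb hy1).trans hba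
  have h1 : √(a * x * c) ≤ √(a * c) := Real.sqrt_le_sqrt (by gcongr)
  have h2 : √(b * y * c) ≤ √(a * c) := Real.sqrt_le_sqrt (by gcongr)
  have h3 : √(a * x * c) * √(b * y * c) ≤ √(a * c) * √(a * c) := by gcongr
  rw [Real.mul_self_sqrt (by positivity)] at h3
  have h4 := Real.sq_sqrt (show 0 ≤ a * x * c by positivity)
  have h5 := Real.sq_sqrt (show 0 ≤ b * y * c by positivity)
  rw [add_sq, h4, h5]
  linarith

/-- Regrouping by index: each `f j` is split into the fractions `1 - β j` and `β j`, and only the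
fraction `β a` at the first index is missing from the left-hand side. -/
lemma sum_split_telescope (f β : ℕ → ℝ) (a n : ℕ) (h : a ≤ n + 1) :
    (∑ j ∈ Finset.Icc a n, (f j * (1 - β j) + f (j + 1) * β (j + 1)))
      + f (n + 1) * (1 - β (n + 1)) = (∑ j ∈ Finset.Icc a (n + 1), f j) - f a * β a := by
  induction n with
  | zero =>
    rcases Nat.le_one_iff_eq_zero_or_eq_one.mp h with rfl | rfl
    · rw [Finset.sum_Icc_succ_top (by omega)]
      simp
      ring
    · simp
      ring
  | succ n ih =>
    rcases Nat.lt_or_ge (n + 1) a with h' | h'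
    · obtain rfl : a = n + 1 + 1 := by omega
      simp
      ring
    · rw [Finset.sum_Icc_succ_top h', Finset.sum_Icc_succ_top h]
      linarith [ih h']

/-- Chain of bounds on the interference power:
`P_int(t) ≤ κP (∑_{j=3}^{t−1} j^{−η} + ∑_{j=1}^{T−t−1} j^{−η}
  + 2∑_{j=3}^{t−2} j^{−η} + 2∑_{j=1}^{T−t−2} j^{−η}) ≤ 6 κP ∑_{j=1}^{T} j^{−η}`. -/
theorem pint_le_partial_sums
    (η κ P : ℝ) (hη : 2 ≤ η) (hκ : 0 < κ) (hP : 0 < P)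
    (T t : ℕ) (hT : 7 ≤ T) (ht4 : 4 ≤ t) (htT : t ≤ T - 3)
    (α : ℕ → ℝ) (hα : ∀ i, 1 ≤ i → i ≤ T - 2 → α i ∈ Set.Icc (0 : ℝ) 1) :
    Pint η κ P T t α ≤
      κ * P * ((∑ j ∈ Finset.Icc 3 (t - 1), (j : ℝ) ^ (-η))
        + (∑ j ∈ Finset.Icc 1 (T - t - 1), (j : ℝ) ^ (-η))
        + 2 * (∑ j ∈ Finset.Icc 3 (t - 2), (j : ℝ) ^ (-η))
        + 2 * (∑ j ∈ Finset.Icc 1 (T - t - 2), (j : ℝ) ^ (-η)))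
    ∧ κ * P * ((∑ j ∈ Finset.Icc 3 (t - 1), (j : ℝ) ^ (-η))
        + (∑ j ∈ Finset.Icc 1 (T - t - 1), (j : ℝ) ^ (-η))
        + 2 * (∑ j ∈ Finset.Icc 3 (t - 2), (j : ℝ) ^ (-η))
        + 2 * (∑ j ∈ Finset.Icc 1 (T - t - 2), (j : ℝ) ^ (-η)))
      ≤ 6 * (κ * P) * ∑ j ∈ Finset.Icc 1 T, (j : ℝ) ^ (-η) := by
  have hc : 0 < κ * P := mul_pos hκ hP
  have hf0 : ∀ j : ℕ, 0 ≤ (j : ℝ) ^ (-η) := fun j => by positivity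
  have hanti : ∀ j : ℕ, 1 ≤ j → ((j + 1 : ℕ) : ℝ) ^ (-η) ≤ (j : ℝ) ^ (-η) := fun j hj =>
    Real.rpow_le_rpow_of_nonpos (by exact_mod_cast hj) (by push_cast; linarith) (by linarith)
  have hcompl : ∀ i, 1 ≤ i → i ≤ T - 2 → 1 - α i ∈ Set.Icc (0 : ℝ) 1 := fun i h1 h2 =>
    ⟨by linarith [(hα i h1 h2).2], by linarith [(hα i h1 h2).1]⟩
  constructor
  · obtain ⟨s, rfl⟩ := Nat.exists_eq_add_of_le' ht4
    obtain ⟨m, rfl⟩ : ∃ m, T = s + 4 + m + 3 := ⟨T - (s + 4) - 3, by omega⟩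
    have e1 : s + 4 - 2 = s + 2 := by omega
    have e2 : s + 4 - 1 = s + 2 + 1 := by omega
    have e3 : s + 4 + m + 3 - (s + 4) - 3 = m := by omega
    have e4 : s + 4 + m + 3 - (s + 4) - 2 = m + 1 := by omega
    have e5 : s + 4 + m + 3 - (s + 4) - 1 = m + 1 + 1 := by omega
    have e6 : s + 4 + m + 3 - 2 = s + 4 + (m + 1) := by omega
    have c1 : ((s + 4 : ℕ) : ℝ) - 1 = ((s + 2 + 1 : ℕ) : ℝ) := by push_cast; ring
    have c2 : ((s + 4 + m + 3 : ℕ) : ℝ) - ((s + 4 : ℕ) : ℝ) - 2 = ((m + 1 : ℕ) : ℝ) := by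
      push_cast; ring
    have c3 : ((s + 4 + m + 3 : ℕ) : ℝ) - ((s + 4 : ℕ) : ℝ) - 1 = ((m + 1 + 1 : ℕ) : ℝ) := by
      push_cast; ring
    rw [Pint, e1, e2, e3, e4, e5, c1, c2, c3]
    rw [e6] at hα hcompl ⊢
    -- Nodes upstream of `t`: the fraction `β j = α (t - j)` belongs to the node at distance `j`.
    have tl := sum_split_telescope (fun j => (j : ℝ) ^ (-η)) (fun j => α (s + 4 - j)) 3 (s + 2)
      (by omega)
    -- Downstream nodes: the two roles are exchanged, `β j = 1 - α (t + j)`.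
    have tr := sum_split_telescope (fun j => (j : ℝ) ^ (-η)) (fun j => 1 - α (s + 4 + j)) 1 m
      (by omega)
    have hl : (∑ j ∈ Finset.Icc 3 (s + 2),
        (√((j : ℝ) ^ (-η) * (1 - α (s + 4 - j)) * (κ * P)) +
          √(((j : ℝ) + 1) ^ (-η) * α (s + 4 - j - 1) * (κ * P))) ^ 2) ≤
        κ * P * (∑ j ∈ Finset.Icc 3 (s + 2), ((j : ℝ) ^ (-η) * (1 - α (s + 4 - j)) +
          ((j + 1 : ℕ) : ℝ) ^ (-η) * α (s + 4 - (j + 1))))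
        + 2 * (κ * P * ∑ j ∈ Finset.Icc 3 (s + 2), (j : ℝ) ^ (-η)) := by
      simp only [Finset.mul_sum, ← Finset.sum_add_distrib]
      refine Finset.sum_le_sum fun j hj => ?_
      rw [Finset.mem_Icc] at hj
      have := sq_sqrt_add_sqrt_le_s2 (hf0 (j + 1)) (hanti j (by omega))
        (hcompl (s + 4 - j) (by omega) (by omega)) (hα (s + 4 - (j + 1)) (by omega) (by omega)) hc.le
      rw [Nat.sub_sub]
      push_cast at this ⊢
      exact this
    have hr : (∑ j ∈ Finset.Icc 1 m,
        (√((j : ℝ) ^ (-η) * α (s + 4 + j) * (κ * P)) +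
          √(((j : ℝ) + 1) ^ (-η) * (1 - α (s + 4 + j + 1)) * (κ * P))) ^ 2) ≤
        κ * P * (∑ j ∈ Finset.Icc 1 m, ((j : ℝ) ^ (-η) * (1 - (1 - α (s + 4 + j))) +
          ((j + 1 : ℕ) : ℝ) ^ (-η) * (1 - α (s + 4 + (j + 1)))))
        + 2 * (κ * P * ∑ j ∈ Finset.Icc 1 m, (j : ℝ) ^ (-η)) := by
      simp only [Finset.mul_sum, ← Finset.sum_add_distrib]
      refine Finset.sum_le_sum fun j hj => ?_
      rw [Finset.mem_Icc] at hj
      have := sq_sqrt_add_sqrt_le_s2 (hf0 (j + 1)) (hanti j (by omega))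
        (hα (s + 4 + j) (by omega) (by omega)) (hcompl (s + 4 + (j + 1)) (by omega) (by omega)) hc.le
      rw [sub_sub_cancel]
      push_cast at this ⊢
      exact this
    have hlast := sq_sqrt_add_sqrt_le_s2 (hf0 (m + 1 + 1)) (hanti (m + 1) (by omega))
      (hα (s + 4 + (m + 1)) (by omega) (by omega)) (y := 1) ⟨zero_le_one, le_rfl⟩ hc.le
    rw [mul_one] at hlast
    have e7 : s + 4 - (s + 2 + 1) = 1 := by omega
    have b1 : 0 ≤ ((3 : ℕ) : ℝ) ^ (-η) * α (s + 4 - 3) :=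
      mul_nonneg (hf0 3) (hα _ (by omega) (by omega)).1
    have b2 : 0 ≤ ((1 : ℕ) : ℝ) ^ (-η) * (1 - α (s + 4 + 1)) :=
      mul_nonneg (hf0 1) (hcompl _ (by omega) (by omega)).1
    simp only [e7] at tl
    rw [Finset.sum_Icc_succ_top (b := m + 1) (by omega),
      show ∑ j ∈ Finset.Icc 1 (m + 1), (j : ℝ) ^ (-η) =
        (∑ j ∈ Finset.Icc 1 m, (j : ℝ) ^ (-η)) + ((m + 1 : ℕ) : ℝ) ^ (-η) from
        Finset.sum_Icc_succ_top (by omega) _]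
    rw [Finset.sum_Icc_succ_top (by omega)] at tr
    have tl' := mul_le_mul_of_nonneg_left (tl.le.trans (sub_le_self _ b1)) hc.le
    have tr' := mul_le_mul_of_nonneg_left (tr.le.trans (sub_le_self _ b2)) hc.le
    linarith
  · have sub : ∀ a b : ℕ, 1 ≤ a → b ≤ T →
        ∑ j ∈ Finset.Icc a b, (j : ℝ) ^ (-η) ≤ ∑ j ∈ Finset.Icc 1 T, (j : ℝ) ^ (-η) :=
      fun a b ha hb => Finset.sum_le_sum_of_subset_of_nonneg (Finset.Icc_subset_Icc ha hb)
        fun j _ _ => hf0 j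
    rw [mul_comm 6 (κ * P), mul_assoc (κ * P) 6]
    refine mul_le_mul_of_nonneg_left ?_ hc.le
    linarith [sub 3 (t - 1) (by omega) (by omega), sub 1 (T - t - 1) (by omega) (by omega),
      sub 3 (t - 2) (by omega) (by omega), sub 1 (T - t - 2) (by omega) (by omega)]
end

section
/- For every real path-loss exponent η ≥ 2, all κ, P, N > 0, every integer T ≥ 7, and every integer t with 4 ≤ t ≤ T−3, if the power splits are α_i = 1/2 for all i = 1, …, T−2, then the reception rate satisfies R_t = (1/2) log₂(1 + P_sig(t)/(P_int(t) + N)) ≥ (1/2) log₂(1 + κP/(2(π² κP + N))), and this lower bound is strictly positive and does not depend on T or t. -/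
/-!
Write `K = κP`. The nearest transmitter alone contributes `K / 2` to the signal power, so it
suffices to bound the interference power by `π² K`. Since `η ≥ 2`, a node at distance `x ≥ 1` has
gain at most `1 / x²`, and `(u + v)² ≤ 2u² + 2v²` bounds a coherent pair at distances `x, x + 1`
with power fractions `a, b` by `2 (a + b) K / x²` (`pair_le`). For half splits the interferers on
the left are dominated by `2K ∑ 1 / j²`, those on the right (including the full-power node `T - 1`)
by `3K ∑ 1 / j²`. As every partial sum of `∑ 1 / j²` is at most `π² / 6`, the interference is at
most `(5/6) π² K`.
-/

open Finset Real

/-- Coherently combined signal power at node `t` under two-hop myopic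
decode-forward in the equally-spaced Gaussian multiple-relay channel. -/
noncomputable def Psig (η κ P : ℝ) (t : ℕ) (α : ℕ → ℝ) : ℝ :=
  (Real.sqrt ((3 : ℝ) ^ (-η) * α (t - 3) * (κ * P)) +
      Real.sqrt ((2 : ℝ) ^ (-η) * (1 - α (t - 2)) * (κ * P))) ^ 2
  + (Real.sqrt ((2 : ℝ) ^ (-η) * α (t - 2) * (κ * P)) +
      Real.sqrt ((1 - α (t - 1)) * (κ * P))) ^ 2

/-- Reception rate at node `t`: `R_t = ½ log₂(1 + P_sig(t)/(P_int(t) + N))`. -/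
noncomputable def Rt (η κ P N : ℝ) (T t : ℕ) (α : ℕ → ℝ) : ℝ :=
  (1 / 2) * Real.logb 2 (1 + Psig η κ P t α / (Pint η κ P T t α + N))

lemma rpow_neg_le_inv_sq {x η : ℝ} (hx : 1 ≤ x) (hη : 2 ≤ η) : x ^ (-η) ≤ 1 / x ^ 2 := by
  have h : x ^ (-η) ≤ x ^ (-(2 : ℝ)) := Real.rpow_le_rpow_of_exponent_le hx (by linarith)
  rwa [Real.rpow_neg (by linarith) 2, Real.rpow_two, ← one_div] at h

/-- A coherent pair of transmitters at distances `x` and `x + 1` with power fractions `a` and `b`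
delivers at most `2 (a + b) K / x²`. -/
lemma pair_le {x η a b K : ℝ} (hx : 1 ≤ x) (hη : 2 ≤ η) (ha : 0 ≤ a) (hb : 0 ≤ b)
    (hK : 0 ≤ K) :
    (Real.sqrt (x ^ (-η) * a * K) + Real.sqrt ((x + 1) ^ (-η) * b * K)) ^ 2
      ≤ 2 * (a + b) * K * (1 / x ^ 2) := by
  have h0 : 0 ≤ x ^ (-η) := Real.rpow_nonneg (by linarith) _
  have h0' : 0 ≤ (x + 1) ^ (-η) := Real.rpow_nonneg (by linarith) _
  have h1 : x ^ (-η) ≤ 1 / x ^ 2 := rpow_neg_le_inv_sq hx hη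
  have h2 : (x + 1) ^ (-η) ≤ 1 / x ^ 2 := by
    refine (rpow_neg_le_inv_sq (by linarith) hη).trans ?_
    gcongr
    linarith
  have e1 := Real.sq_sqrt (by positivity : 0 ≤ x ^ (-η) * a * K)
  have e2 := Real.sq_sqrt (by positivity : 0 ≤ (x + 1) ^ (-η) * b * K)
  have i1 : x ^ (-η) * a * K ≤ 1 / x ^ 2 * a * K := by gcongr
  have i2 : (x + 1) ^ (-η) * b * K ≤ 1 / x ^ 2 * b * K := by gcongr
  have := add_sq_le (a := Real.sqrt (x ^ (-η) * a * K))
    (b := Real.sqrt ((x + 1) ^ (-η) * b * K))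
  rw [e1, e2] at this
  linarith

lemma sum_inv_sq_le (s : Finset ℕ) : ∑ j ∈ s, 1 / (j : ℝ) ^ 2 ≤ Real.pi ^ 2 / 6 :=
  sum_le_hasSum s (fun _ _ => by positivity) hasSum_zeta_two

/-- For half splits the interference power is at most `π² κP`, uniformly in `T` and `t`. -/
lemma Pint_le {η κ P : ℝ} (hη : 2 ≤ η) (hK : 0 ≤ κ * P)
    {T t : ℕ} (hT : 7 ≤ T) (ht4 : 4 ≤ t) (htT : t ≤ T - 3)
    {α : ℕ → ℝ} (hα : ∀ i, 1 ≤ i → i ≤ T - 2 → α i = 1 / 2) :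
    Pint η κ P T t α ≤ Real.pi ^ 2 * (κ * P) := by
  obtain ⟨n, rfl⟩ : ∃ n, t = n + 2 := ⟨t - 2, by omega⟩
  obtain ⟨k, rfl⟩ : ∃ k, T = n + 2 + 3 + k := ⟨T - (n + 2 + 3), by omega⟩
  unfold Pint
  generalize κ * P = K at *
  have e1 : n + 2 - 2 = n := by omega
  have e2 : n + 2 + 3 + k - (n + 2) - 3 = k := by omega
  rw [e1, e2, hα 1 (by omega) (by omega), hα (n + 2 + 3 + k - 2) (by omega) (by omega)]
  have hleft : ∑ j ∈ Finset.Icc 3 n,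
      (Real.sqrt ((j : ℝ) ^ (-η) * (1 - α (n + 2 - j)) * K) +
        Real.sqrt (((j : ℝ) + 1) ^ (-η) * α (n + 2 - j - 1) * K)) ^ 2
      ≤ 2 * K * ∑ j ∈ Finset.Icc 3 n, 1 / (j : ℝ) ^ 2 := by
    rw [Finset.mul_sum]
    refine Finset.sum_le_sum fun j hj => ?_
    rw [Finset.mem_Icc] at hj
    rw [hα (n + 2 - j) (by omega) (by omega), hα (n + 2 - j - 1) (by omega) (by omega)]
    have hj1 : (1 : ℝ) ≤ j := by exact_mod_cast (by omega : 1 ≤ j)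
    refine (pair_le hj1 hη (by norm_num) (by norm_num) hK).trans_eq (by ring)
  have hright : ∑ j ∈ Finset.Icc 1 k,
      (Real.sqrt ((j : ℝ) ^ (-η) * α (n + 2 + j) * K) +
        Real.sqrt (((j : ℝ) + 1) ^ (-η) * (1 - α (n + 2 + j + 1)) * K)) ^ 2
      ≤ 2 * K * ∑ j ∈ Finset.Icc 1 k, 1 / (j : ℝ) ^ 2 := by
    rw [Finset.mul_sum]
    refine Finset.sum_le_sum fun j hj => ?_
    rw [Finset.mem_Icc] at hj
    rw [hα (n + 2 + j) (by omega) (by omega), hα (n + 2 + j + 1) (by omega) (by omega)]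
    have hj1 : (1 : ℝ) ≤ j := by exact_mod_cast hj.1
    refine (pair_le hj1 hη (by norm_num) (by norm_num) hK).trans_eq (by ring)
  have hfirst : (((n + 2 : ℕ) : ℝ) - 1) ^ (-η) * (1 - 1 / 2) * K
      ≤ 2 * K * (1 / ((n + 1 : ℕ) : ℝ) ^ 2) := by
    have e : ((n + 2 : ℕ) : ℝ) - 1 = ((n + 1 : ℕ) : ℝ) := by push_cast; ring
    rw [e]
    have h := mul_le_mul_of_nonneg_right (rpow_neg_le_inv_sq
      (by exact_mod_cast (by omega : 1 ≤ n + 1) : (1 : ℝ) ≤ ((n + 1 : ℕ) : ℝ)) hη) hK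
    have h' : 0 ≤ 1 / ((n + 1 : ℕ) : ℝ) ^ 2 * K := by positivity
    linarith
  have hlast : (Real.sqrt ((((n + 2 + 3 + k : ℕ) : ℝ) - ((n + 2 : ℕ) : ℝ) - 2) ^ (-η)
        * (1 / 2) * K) +
      Real.sqrt ((((n + 2 + 3 + k : ℕ) : ℝ) - ((n + 2 : ℕ) : ℝ) - 1) ^ (-η) * K)) ^ 2
      ≤ 3 * K * (1 / ((k + 1 : ℕ) : ℝ) ^ 2) := by
    have ea : ((n + 2 + 3 + k : ℕ) : ℝ) - ((n + 2 : ℕ) : ℝ) - 2 = ((k + 1 : ℕ) : ℝ) := by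
      push_cast; ring
    have eb : ((n + 2 + 3 + k : ℕ) : ℝ) - ((n + 2 : ℕ) : ℝ) - 1 = ((k + 1 : ℕ) : ℝ) + 1 := by
      push_cast; ring
    rw [ea, eb]
    have h := pair_le (x := ((k + 1 : ℕ) : ℝ)) (a := 1 / 2) (b := 1)
      (by exact_mod_cast (by omega : 1 ≤ k + 1)) hη (by norm_num) (by norm_num) hK
    rw [mul_one] at h
    exact h.trans_eq (by ring)
  -- The single leftmost and rightmost terms extend the two partial sums by one index each.
  have hs1 := sum_inv_sq_le (Finset.Icc 3 (n + 1))
  have hs2 := sum_inv_sq_le (Finset.Icc 1 (k + 1))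
  rw [Finset.sum_Icc_succ_top (by omega)] at hs1 hs2
  have hS : 0 ≤ ∑ j ∈ Finset.Icc 1 k, 1 / (j : ℝ) ^ 2 :=
    Finset.sum_nonneg fun _ _ => by positivity
  have m1 := mul_le_mul_of_nonneg_left hs1 hK
  have m2 := mul_le_mul_of_nonneg_left hs2 hK
  have m3 := mul_nonneg hK hS
  have m4 : 0 ≤ K * Real.pi ^ 2 := by positivity
  rw [mul_add] at m1 m2
  linarith

/-- For half splits the nearest transmitter alone delivers power `κP / 2`. -/
lemma le_Psig {η κ P : ℝ} (hK : 0 ≤ κ * P) {t : ℕ} {α : ℕ → ℝ} (h : α (t - 1) = 1 / 2) :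
    κ * P / 2 ≤ Psig η κ P t α := by
  unfold Psig
  rw [h]
  generalize κ * P = K at *
  have e := Real.sq_sqrt (by linarith : 0 ≤ (1 - 1 / 2) * K)
  have hu := Real.sqrt_nonneg ((1 - 1 / 2) * K)
  have hv := Real.sqrt_nonneg ((2 : ℝ) ^ (-η) * α (t - 2) * K)
  nlinarith [mul_nonneg hu hv, sq_nonneg (Real.sqrt ((3 : ℝ) ^ (-η) * α (t - 3) * K) +
      Real.sqrt ((2 : ℝ) ^ (-η) * (1 - α (t - 2)) * K)),
    sq_nonneg (Real.sqrt ((2 : ℝ) ^ (-η) * α (t - 2) * K))]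

lemma Pint_nonneg {η κ P : ℝ} (hK : 0 ≤ κ * P) {T t : ℕ} (ht : 1 ≤ t)
    {α : ℕ → ℝ} (h : α 1 = 1 / 2) : 0 ≤ Pint η κ P T t α := by
  unfold Pint
  rw [h]
  have ht' : (0 : ℝ) ≤ (t : ℝ) - 1 := by
    have : (1 : ℝ) ≤ t := by exact_mod_cast ht
    linarith
  have h1 : 0 ≤ ((t : ℝ) - 1) ^ (-η) * (1 - 1 / 2) * (κ * P) :=
    mul_nonneg (mul_nonneg (Real.rpow_nonneg ht' _) (by norm_num)) hK
  positivity

/-- With all power splits `α_i = 1/2`, the reception rate at every interior node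
is at least `½ log₂(1 + κP/(2(π²κP + N)))`, a strictly positive bound that is
independent of `T` and `t`. -/
theorem rate_lower_bound_half_splits
    (η κ P N : ℝ) (hη : 2 ≤ η) (hκ : 0 < κ) (hP : 0 < P) (hN : 0 < N)
    (T t : ℕ) (hT : 7 ≤ T) (ht4 : 4 ≤ t) (htT : t ≤ T - 3)
    (α : ℕ → ℝ) (hα : ∀ i, 1 ≤ i → i ≤ T - 2 → α i = 1 / 2) :
    (1 / 2) * Real.logb 2 (1 + κ * P / (2 * (Real.pi ^ 2 * κ * P + N)))
        ≤ Rt η κ P N T t α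
    ∧ 0 < (1 / 2) * Real.logb 2 (1 + κ * P / (2 * (Real.pi ^ 2 * κ * P + N))) := by
  have hK : 0 < κ * P := mul_pos hκ hP
  have hden : 0 < Real.pi ^ 2 * κ * P + N := by positivity
  have hq : 0 < κ * P / (2 * (Real.pi ^ 2 * κ * P + N)) := by positivity
  refine ⟨?_, mul_pos (by norm_num) (Real.logb_pos (by norm_num) (by linarith))⟩
  have hI := Pint_le hη hK.le hT ht4 htT hα
  have hI0 := Pint_nonneg (η := η) (T := T) hK.le (by omega : 1 ≤ t)
    (hα 1 le_rfl (by omega))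
  have hS := le_Psig (η := η) hK.le (hα (t - 1) (by omega) (by omega))
  unfold Rt
  refine mul_le_mul_of_nonneg_left ?_ (by norm_num)
  refine Real.logb_le_logb_of_le (by norm_num) (by linarith) ?_
  rw [← div_div]
  have : κ * P / 2 / (Real.pi ^ 2 * κ * P + N) ≤
      Psig η κ P t α / (Pint η κ P T t α + N) :=
    div_le_div₀ (by linarith) hS (by linarith) (by linarith)
  linarith
end

section
/- For every real path-loss exponent η ≥ 2 and all κ, P, N > 0, there exists δ > 0 such that for every integer T ≥ 7 there exist power splits α_1, …, α_{T−2} ∈ [0,1] with R_t ≥ δ for every integer t with 4 ≤ t ≤ T−3; that is, the two-hop myopic decode-forward reception rates remain bounded away from zero, uniformly in the network size T, as T grows without bound. -/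
/-!
Take every power split equal to `0`, so that each node spends its full power on the component
meant for the next node. The signal power at node `t` is then at least the power `κP` received from
node `t - 1`, while every other node at distance `d` contributes at most `d ^ (-η) κP` to the
interference. Since `η > 1`, the series `∑ d ^ (-η)` converges, so the interference is bounded by
a constant independent of `t` and `T` (`Pint_zero_le`), and the rate is bounded below by monotonicity
of the logarithm.
-/

open Finset Real

/-- The bound on the interference is uniform in `t` and `T`: each of the two sums (nodes upstream
and downstream of `t`) is a partial sum of the convergent series `∑ j ^ (-η)`, and each of the two
boundary terms has distance at least `1`. -/
lemma Pint_zero_le (η κ P : ℝ) (hη : 2 ≤ η) (hκ : 0 < κ) (hP : 0 < P) (T t : ℕ)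
    (ht : 4 ≤ t) (htT : t + 3 ≤ T) :
    Pint η κ P T t (fun _ => 0) ≤ (2 * (∑' j : ℕ, (j : ℝ) ^ (-η)) + 2) * (κ * P) := by
  have hq : 0 < κ * P := mul_pos hκ hP
  have hs : Summable (fun j : ℕ => (j : ℝ) ^ (-η)) :=
    Real.summable_nat_rpow.2 (by linarith)
  have hnn : ∀ j : ℕ, 0 ≤ (j : ℝ) ^ (-η) := fun j => Real.rpow_nonneg (Nat.cast_nonneg j) _
  have h1 : ∑ j ∈ Finset.Icc 3 (t - 2), (j : ℝ) ^ (-η) ≤ ∑' j : ℕ, (j : ℝ) ^ (-η) :=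
    hs.sum_le_tsum _ fun j _ => hnn j
  have h2 : ∑ j ∈ Finset.Icc 1 (T - t - 3), ((j : ℝ) + 1) ^ (-η)
      ≤ ∑' j : ℕ, (j : ℝ) ^ (-η) := by
    have hs' : Summable (fun j : ℕ => ((j + 1 : ℕ) : ℝ) ^ (-η)) :=
      (summable_nat_add_iff 1).2 hs
    have h := hs'.sum_le_tsum (Finset.Icc 1 (T - t - 3)) fun j _ => hnn (j + 1)
    have h0 := hs.tsum_eq_zero_add
    have := hnn 0
    push_cast at h h0 this
    linarith
  have ht' : (4 : ℝ) ≤ t := by exact_mod_cast ht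
  have hT' : (t : ℝ) + 3 ≤ T := by exact_mod_cast htT
  have h3 : ((t : ℝ) - 1) ^ (-η) ≤ 1 :=
    Real.rpow_le_one_of_one_le_of_nonpos (by linarith) (by linarith)
  have h4 : ((T : ℝ) - t - 1) ^ (-η) ≤ 1 :=
    Real.rpow_le_one_of_one_le_of_nonpos (by linarith) (by linarith)
  have h4' : 0 ≤ ((T : ℝ) - t - 1) ^ (-η) := Real.rpow_nonneg (by linarith) _
  have e1 : ∀ j : ℕ, √((j : ℝ) ^ (-η) * (κ * P)) ^ 2 = (j : ℝ) ^ (-η) * (κ * P) :=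
    fun j => Real.sq_sqrt (mul_nonneg (hnn j) hq.le)
  have e2 : ∀ j : ℕ, √(((j : ℝ) + 1) ^ (-η) * (κ * P)) ^ 2 = ((j : ℝ) + 1) ^ (-η) * (κ * P) :=
    fun j => Real.sq_sqrt (mul_nonneg (Real.rpow_nonneg (by positivity) _) hq.le)
  have e3 : √(((T : ℝ) - t - 1) ^ (-η) * (κ * P)) ^ 2 = ((T : ℝ) - t - 1) ^ (-η) * (κ * P) :=
    Real.sq_sqrt (mul_nonneg h4' hq.le)
  simp only [Pint, mul_zero, zero_mul, sub_zero, mul_one, Real.sqrt_zero, add_zero, zero_add,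
    e1, e2, e3, ← Finset.sum_mul, ← add_mul]
  exact mul_le_mul_of_nonneg_right (by linarith) hq.le

lemma Psig_zero_ge (η κ P : ℝ) (hκ : 0 < κ) (hP : 0 < P) (t : ℕ) :
    κ * P ≤ Psig η κ P t (fun _ => 0) := by
  have hq : 0 ≤ κ * P := (mul_pos hκ hP).le
  simp only [Psig, mul_zero, zero_mul, sub_zero, one_mul, Real.sqrt_zero, zero_add,
    Real.sq_sqrt hq]
  exact le_add_of_nonneg_left (sq_nonneg _)

lemma Pint_zero_nonneg (η κ P : ℝ) (hκ : 0 < κ) (hP : 0 < P) (T t : ℕ) (ht : 4 ≤ t) :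
    0 ≤ Pint η κ P T t (fun _ => 0) := by
  have ht' : (4 : ℝ) ≤ t := by exact_mod_cast ht
  have h : 0 ≤ ((t : ℝ) - 1) ^ (-η) := Real.rpow_nonneg (by linarith) _
  unfold Pint
  simp only [sub_zero]
  positivity

/-- The two-hop myopic decode-forward reception rates remain bounded away from
zero uniformly in the network size `T`: there is a `δ > 0` such that for every
`T ≥ 7` one can choose power splits `α_1, …, α_{T−2} ∈ [0,1]` making every
interior reception rate at least `δ`. -/
theorem rates_bounded_away_from_zero
    (η κ P N : ℝ) (hη : 2 ≤ η) (hκ : 0 < κ) (hP : 0 < P) (hN : 0 < N) :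
    ∃ δ : ℝ, 0 < δ ∧ ∀ T : ℕ, 7 ≤ T →
      ∃ α : ℕ → ℝ, (∀ i, 1 ≤ i → i ≤ T - 2 → α i ∈ Set.Icc (0 : ℝ) 1) ∧
        ∀ t : ℕ, 4 ≤ t → t ≤ T - 3 → δ ≤ Rt η κ P N T t α := by
  set S : ℝ := ∑' j : ℕ, (j : ℝ) ^ (-η) with hS
  have hq : 0 < κ * P := mul_pos hκ hP
  have hS0 : 0 ≤ S := tsum_nonneg fun j => Real.rpow_nonneg (Nat.cast_nonneg j) _
  have hc : 0 < κ * P / ((2 * S + 2) * (κ * P) + N) := by positivity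
  refine ⟨(1 / 2) * Real.logb 2 (1 + κ * P / ((2 * S + 2) * (κ * P) + N)),
    mul_pos (by norm_num) (Real.logb_pos (by norm_num) (by linarith)), fun T hT =>
    ⟨fun _ => 0, fun i _ _ => ⟨le_rfl, zero_le_one⟩, fun t ht htT => ?_⟩⟩
  have hle := Pint_zero_le η κ P hη hκ hP T t ht (by omega)
  have hsig := Psig_zero_ge η κ P hκ hP t
  have hnn := Pint_zero_nonneg η κ P hκ hP T t ht
  have hdiv : κ * P / ((2 * S + 2) * (κ * P) + N)
      ≤ Psig η κ P t (fun _ => 0) / (Pint η κ P T t (fun _ => 0) + N) :=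
    div_le_div₀ (hq.le.trans hsig) hsig (by linarith) (by linarith)
  exact mul_le_mul_of_nonneg_left
    (Real.logb_le_logb_of_le (by norm_num) (by linarith) (by linarith)) (by norm_num)
end

section
/- Let P₁, P₂, P₃ > 0 and d₃₄ > 0 with d₁₄ = d₂₄ and d₁₄² = (√3/2 + d₃₄)² + 1/4. If P₁ + P₂ ≤ (P₃/d₃₄²)/(1 + P₁/d₁₄² + P₂/d₂₄²), then R_1-hop = R_omniscient = (1/2) log₂(1 + P₁ + P₂); that is, when the sources transmit at sufficiently low power relative to the relay, one-hop myopic decode-forward achieves the same sum rate as omniscient decode-forward. -/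
/-! The relay's reception rate `R'₃(α)` is largest at `α = 0`, where it equals
`½ log₂(1 + P₁ + P₂)`; this bounds the omniscient rate from above. In the low-power regime the
destination's rate is no bottleneck: the hypothesis says so directly for the one-hop scheme, and
for the omniscient scheme at `α = 0` the sources' signals add to the received power instead of
acting as noise, so its destination rate is larger still. Hence both minima equal the relay's
rate, and the omniscient supremum is attained at `α = 0`. -/

open Real

/-- Achievable sum rate of one-hop myopic decode-forward in the four-node
Gaussian multiple-access relay channel. -/
noncomputable def R1hop (P1 P2 P3 d14 d24 d34 : ℝ) : ℝ :=
  min ((1 / 2) * Real.logb 2 (1 + P1 + P2))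
      ((1 / 2) * Real.logb 2 (1 + (P3 / d34 ^ 2) / (1 + P1 / d14 ^ 2 + P2 / d24 ^ 2)))

/-- Achievable sum rate of omniscient decode-forward in the four-node Gaussian
multiple-access relay channel: the supremum over power splits
`α₁, α₂ ∈ [0,1]`, `β₁, β₂ ≥ 0`, `β₁ + β₂ = 1` of `min{R'₃(α), R'₄(α, β)}`. -/
noncomputable def Romniscient (P1 P2 P3 d14 d24 d34 : ℝ) : ℝ :=
  sSup {r : ℝ | ∃ a1 a2 b1 b2 : ℝ,
    a1 ∈ Set.Icc (0 : ℝ) 1 ∧ a2 ∈ Set.Icc (0 : ℝ) 1 ∧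
    0 ≤ b1 ∧ 0 ≤ b2 ∧ b1 + b2 = 1 ∧
    r = min ((1 / 2) * Real.logb 2 (1 + (1 - a1) * P1 + (1 - a2) * P2))
            ((1 / 2) * Real.logb 2 (1 + P1 / d14 ^ 2 + P2 / d24 ^ 2 + P3 / d34 ^ 2
              + 2 * Real.sqrt (a1 * b1 * P1 * P3) / (d14 * d34)
              + 2 * Real.sqrt (a2 * b2 * P2 * P3) / (d24 * d34)))}

/-- When the sources transmit at low power relative to the relay, i.e.
`P₁ + P₂ ≤ (P₃/d₃₄²)/(1 + P₁/d₁₄² + P₂/d₂₄²)`, one-hop myopic decode-forward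
achieves the same sum rate `½ log₂(1 + P₁ + P₂)` as omniscient decode-forward. -/
theorem myopic_eq_omniscient_low_source_power
    (P1 P2 P3 d34 d14 d24 : ℝ)
    (hP1 : 0 < P1) (hP2 : 0 < P2) (hP3 : 0 < P3) (hd34 : 0 < d34)
    (hd14pos : 0 < d14) (hd : d14 = d24)
    (hd14 : d14 ^ 2 = (Real.sqrt 3 / 2 + d34) ^ 2 + 1 / 4)
    (hlow : P1 + P2 ≤ (P3 / d34 ^ 2) / (1 + P1 / d14 ^ 2 + P2 / d24 ^ 2)) :
    R1hop P1 P2 P3 d14 d24 d34 = (1 / 2) * Real.logb 2 (1 + P1 + P2)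
    ∧ Romniscient P1 P2 P3 d14 d24 d34 = (1 / 2) * Real.logb 2 (1 + P1 + P2) := by
  subst hd
  have hA1 : 0 < P1 / d14 ^ 2 := by positivity
  have hA2 : 0 < P2 / d14 ^ 2 := by positivity
  have hA3 : 0 < P3 / d34 ^ 2 := by positivity
  refine ⟨min_eq_left ?_, IsGreatest.csSup_eq ⟨?_, ?_⟩⟩
  · have := Real.logb_le_logb_of_le (b := 2) (by norm_num) (by positivity)
      (show 1 + P1 + P2 ≤ 1 + (P3 / d34 ^ 2) / (1 + P1 / d14 ^ 2 + P2 / d14 ^ 2) by linarith)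
    linarith
  -- The split `α = 0`, `β = (1, 0)` attains the maximum.
  · refine ⟨0, 0, 1, 0, by simp, by simp, by norm_num, le_rfl, by norm_num, ?_⟩
    have hdiv : (P3 / d34 ^ 2) / (1 + P1 / d14 ^ 2 + P2 / d14 ^ 2) ≤ P3 / d34 ^ 2 :=
      div_le_self hA3.le (by linarith)
    have := Real.logb_le_logb_of_le (b := 2) (by norm_num) (by positivity)
      (show 1 + P1 + P2 ≤ 1 + P1 / d14 ^ 2 + P2 / d14 ^ 2 + P3 / d34 ^ 2 by linarith)
    simp only [sub_zero, one_mul, zero_mul, Real.sqrt_zero, mul_zero, zero_div, add_zero]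
    exact (min_eq_left (by linarith)).symm
  · rintro r ⟨a1, a2, b1, b2, ⟨h1, h1'⟩, ⟨h2, h2'⟩, -, -, -, rfl⟩
    refine (min_le_left _ _).trans ?_
    have e1 : 0 ≤ (1 - a1) * P1 := mul_nonneg (by linarith) hP1.le
    have e2 : 0 ≤ (1 - a2) * P2 := mul_nonneg (by linarith) hP2.le
    have := Real.logb_le_logb_of_le (b := 2) (by norm_num) (by linarith)
      (show 1 + (1 - a1) * P1 + (1 - a2) * P2 ≤ 1 + P1 + P2 by nlinarith)
    linarith
end
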